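/- Let A, B be unital C*-algebras over ℂ and f : A → B a unital ★-algebra homomorphism. The following are equivalent: (a) for all commutative C*-subalgebras C, C' of A and every commutative C*-subalgebra D of B with f(C) ⊆ D and f(C') ⊆ D, there exists a commutative C*-subalgebra C'' of A with C ⊆ C'', C' ⊆ C'' and f(C'') ⊆ D; (b) for all normal elements a, a' ∈ A, if f(a) and f(a') commute then a and a' commute. -/

import Mathlib

/-!
A closed star subalgebra is commutative as soon as its generators commute with each other and with
each other's adjoints. For the commuting normal elements `f a` and `f a'` of `B`, the second
condition is Fuglede's theorem, so that they generate an admissible `D`. For the generating set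
`C ∪ C'` in `A` it is automatic, since this set is closed under `star`. Continuity of `f`,
automatic between C⋆-algebras, puts the image of a closed star subalgebra into a closed `D` as soon
as the generators are sent there.
-/

/-- A map reflects commeasurability if normal elements commute whenever their images do. -/
def ReflectsCommeasurability {A B : Type*} [Mul A] [Star A] [Mul B] (f : A → B) : Prop :=
  ∀ a a' : A, IsStarNormal a → IsStarNormal a' → f a * f a' = f a' * f a → a * a' = a' * a

/-- Two commutative closed star subalgebras of `A` that `f` maps into a common commutative closed
star subalgebra `D` of `B` lie in a common one that `f` still maps into `D`. For C⋆-algebras over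
`R = ℂ`, the closed star subalgebras are the C⋆-subalgebras. -/
def AmalgamatesCommutativeSubalgebras {R A B : Type*} [CommSemiring R] [StarRing R]
    [TopologicalSpace A] [Semiring A] [StarRing A] [Algebra R A] [StarModule R A]
    [TopologicalSpace B] [Semiring B] [StarRing B] [Algebra R B] [StarModule R B]
    (f : A →⋆ₐ[R] B) : Prop :=
  ∀ (C C' : StarSubalgebra R A) (D : StarSubalgebra R B),
    IsClosed (C : Set A) → (∀ x ∈ C, ∀ y ∈ C, x * y = y * x) →
    IsClosed (C' : Set A) → (∀ x ∈ C', ∀ y ∈ C', x * y = y * x) →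
    IsClosed (D : Set B) → (∀ x ∈ D, ∀ y ∈ D, x * y = y * x) →
    f '' (C : Set A) ⊆ (D : Set B) → f '' (C' : Set A) ⊆ (D : Set B) →
    ∃ C'' : StarSubalgebra R A, IsClosed (C'' : Set A) ∧
      (∀ x ∈ C'', ∀ y ∈ C'', x * y = y * x) ∧
      C ≤ C'' ∧ C' ≤ C'' ∧ f '' (C'' : Set A) ⊆ (D : Set B)

section ClosedAdjoin

variable {R A B : Type*} [CommSemiring R] [StarRing R]
  [TopologicalSpace A] [Semiring A] [StarRing A] [Algebra R A] [StarModule R A]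
  [IsSemitopologicalSemiring A] [ContinuousStar A]

theorem mul_comm_of_mem_topologicalClosure_adjoin [T2Space A] {s : Set A}
    (hcomm : ∀ x ∈ s, ∀ y ∈ s, x * y = y * x)
    (hcomm_star : ∀ x ∈ s, ∀ y ∈ s, x * star y = star y * x) :
    ∀ x ∈ (StarAlgebra.adjoin R s).topologicalClosure,
      ∀ y ∈ (StarAlgebra.adjoin R s).topologicalClosure, x * y = y * x := by
  have := StarAlgebra.isMulCommutative_adjoin R hcomm hcomm_star
  let := (StarAlgebra.adjoin R s).commSemiringTopologicalClosure
    fun x y => Subtype.ext (setLike_mul_comm x.2 y.2)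
  intro x hx y hy
  exact congrArg Subtype.val
    (mul_comm (⟨x, hx⟩ : (StarAlgebra.adjoin R s).topologicalClosure) ⟨y, hy⟩)

theorem mul_comm_of_mem_elemental [T2Space A] {a : A} (ha : IsStarNormal a) :
    ∀ x ∈ StarAlgebra.elemental R a, ∀ y ∈ StarAlgebra.elemental R a, x * y = y * x := by
  intro x hx y hy
  exact congrArg Subtype.val (mul_comm (⟨x, hx⟩ : StarAlgebra.elemental R a) ⟨y, hy⟩)

theorem subset_topologicalClosure_adjoin (s : Set A) :
    s ⊆ (StarAlgebra.adjoin R s).topologicalClosure :=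
  (StarAlgebra.subset_adjoin R s).trans (StarSubalgebra.le_topologicalClosure _)

theorem image_topologicalClosure_adjoin_subset
    [TopologicalSpace B] [Semiring B] [StarRing B] [Algebra R B] [StarModule R B]
    {f : A →⋆ₐ[R] B} (hf : Continuous f) {s : Set A} {D : StarSubalgebra R B}
    (hD : IsClosed (D : Set B)) (hs : f '' s ⊆ D) :
    f '' ((StarAlgebra.adjoin R s).topologicalClosure : Set A) ⊆ D := by
  have subset_comap : s ⊆ D.comap f := fun x hx => hs ⟨x, hx, rfl⟩
  have closure_le_comap : (StarAlgebra.adjoin R s).topologicalClosure ≤ D.comap f :=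
    StarSubalgebra.topologicalClosure_minimal (StarAlgebra.adjoin_le subset_comap)
      (hD.preimage hf)
  exact Set.image_subset_iff.mpr closure_le_comap

end ClosedAdjoin

theorem exists_isClosed_commutative_starSubalgebra {R B : Type*} [CommSemiring R] [StarRing R]
    [CStarAlgebra B] [Algebra R B] [StarModule R B] {b b' : B}
    (hb : IsStarNormal b) (hb' : IsStarNormal b') (h : Commute b b') :
    ∃ D : StarSubalgebra R B, IsClosed (D : Set B) ∧ (∀ x ∈ D, ∀ y ∈ D, x * y = y * x) ∧
      b ∈ D ∧ b' ∈ D := by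
  have hcomm : ∀ x ∈ ({b, b'} : Set B), ∀ y ∈ ({b, b'} : Set B), x * y = y * x := by
    rintro x (rfl | rfl) y (rfl | rfl)
    exacts [rfl, h, h.symm, rfl]
  have hnormal : ∀ y ∈ ({b, b'} : Set B), IsStarNormal y := by
    rintro y (rfl | rfl) <;> assumption
  have fuglede : ∀ x ∈ ({b, b'} : Set B), ∀ y ∈ ({b, b'} : Set B), x * star y = star y * x :=
    fun x hx y hy => (hnormal y hy).commute_star_right (hcomm x hx y hy)
  have hsub := subset_topologicalClosure_adjoin (R := R) {b, b'}
  exact ⟨_, StarSubalgebra.isClosed_topologicalClosure _,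
    mul_comm_of_mem_topologicalClosure_adjoin hcomm fuglede,
    hsub (Set.mem_insert b {b'}), hsub (Set.mem_insert_of_mem b rfl)⟩

section Equivalence

variable {R A B : Type*} [CommSemiring R] [StarRing R]
  [TopologicalSpace A] [Semiring A] [StarRing A] [Algebra R A] [StarModule R A]
  [IsSemitopologicalSemiring A] [ContinuousStar A] [T2Space A]

theorem AmalgamatesCommutativeSubalgebras.reflectsCommeasurability
    [CStarAlgebra B] [Algebra R B] [StarModule R B] {f : A →⋆ₐ[R] B} (hf : Continuous f)
    (h : AmalgamatesCommutativeSubalgebras f) : ReflectsCommeasurability f := by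
  intro a a' ha ha' hcomm
  obtain ⟨D, hD, hD_comm, haD, ha'D⟩ :=
    exists_isClosed_commutative_starSubalgebra (R := R) (ha.map f) (ha'.map f) hcomm
  have image_elemental : ∀ x, f x ∈ D → f '' (StarAlgebra.elemental R x : Set A) ⊆ D :=
    fun x hx => image_topologicalClosure_adjoin_subset hf hD (by simpa using hx)
  obtain ⟨C'', -, hC'', hle, hle', -⟩ := h
    (StarAlgebra.elemental R a) (StarAlgebra.elemental R a') D
    (StarAlgebra.elemental.isClosed R a) (mul_comm_of_mem_elemental ha)
    (StarAlgebra.elemental.isClosed R a') (mul_comm_of_mem_elemental ha')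
    hD hD_comm (image_elemental a haD) (image_elemental a' ha'D)
  exact hC'' a (hle (StarAlgebra.elemental.self_mem R a))
    a' (hle' (StarAlgebra.elemental.self_mem R a'))

theorem ReflectsCommeasurability.amalgamatesCommutativeSubalgebras
    [TopologicalSpace B] [Semiring B] [StarRing B] [Algebra R B] [StarModule R B]
    {f : A →⋆ₐ[R] B} (hf : Continuous f) (h : ReflectsCommeasurability f) :
    AmalgamatesCommutativeSubalgebras f := by
  intro C C' D _ hC _ hC' hD hD_comm hCD hC'D
  have hnormal : ∀ x ∈ (C ∪ C' : Set A), IsStarNormal x := by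
    rintro x (hx | hx)
    · exact ⟨hC _ (star_mem hx) _ hx⟩
    · exact ⟨hC' _ (star_mem hx) _ hx⟩
  have hstar : ∀ x ∈ (C ∪ C' : Set A), star x ∈ (C ∪ C' : Set A) :=
    fun _ => Or.imp star_mem star_mem
  have himage : f '' (C ∪ C' : Set A) ⊆ D := Set.image_union f _ _ ▸ Set.union_subset hCD hC'D
  have hcomm : ∀ x ∈ (C ∪ C' : Set A), ∀ y ∈ (C ∪ C' : Set A), x * y = y * x :=
    fun x hx y hy => h x y (hnormal x hx) (hnormal y hy)
      (hD_comm _ (himage ⟨x, hx, rfl⟩) _ (himage ⟨y, hy, rfl⟩))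
  have hsub := subset_topologicalClosure_adjoin (R := R) (C ∪ C' : Set A)
  exact ⟨_, StarSubalgebra.isClosed_topologicalClosure _,
    mul_comm_of_mem_topologicalClosure_adjoin hcomm fun x hx y hy => hcomm x hx _ (hstar y hy),
    Set.subset_union_left.trans hsub, Set.subset_union_right.trans hsub,
    image_topologicalClosure_adjoin_subset hf hD himage⟩

theorem reflects_commeasurability_iff_general
    [CStarAlgebra B] [Algebra R B] [StarModule R B] {f : A →⋆ₐ[R] B} (hf : Continuous f) :
    AmalgamatesCommutativeSubalgebras f ↔ ReflectsCommeasurability f :=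
  ⟨AmalgamatesCommutativeSubalgebras.reflectsCommeasurability hf,
    ReflectsCommeasurability.amalgamatesCommutativeSubalgebras hf⟩

end Equivalence

/-- For a unital ★-algebra homomorphism `f : A → B` of unital C*-algebras, the following are
equivalent: (a) whenever two commutative C*-subalgebras `C, C'` of `A` map into a common
commutative C*-subalgebra `D` of `B`, they are contained in a common commutative C*-subalgebra
`C''` of `A` mapping into `D`; (b) `f` reflects commeasurability: normal elements with
commuting images commute. -/
theorem reflects_commeasurability_iff
    {A : Type*} [NormedRing A] [StarRing A] [CStarRing A] [CompleteSpace A]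
    [NormedAlgebra ℂ A] [StarModule ℂ A]
    {B : Type*} [NormedRing B] [StarRing B] [CStarRing B] [CompleteSpace B]
    [NormedAlgebra ℂ B] [StarModule ℂ B]
    (f : A →⋆ₐ[ℂ] B) :
    (∀ (C C' : StarSubalgebra ℂ A) (D : StarSubalgebra ℂ B),
      IsClosed (C : Set A) → (∀ x ∈ C, ∀ y ∈ C, x * y = y * x) →
      IsClosed (C' : Set A) → (∀ x ∈ C', ∀ y ∈ C', x * y = y * x) →
      IsClosed (D : Set B) → (∀ x ∈ D, ∀ y ∈ D, x * y = y * x) →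
      f '' (C : Set A) ⊆ (D : Set B) → f '' (C' : Set A) ⊆ (D : Set B) →
      ∃ C'' : StarSubalgebra ℂ A, IsClosed (C'' : Set A) ∧
        (∀ x ∈ C'', ∀ y ∈ C'', x * y = y * x) ∧
        C ≤ C'' ∧ C' ≤ C'' ∧ f '' (C'' : Set A) ⊆ (D : Set B)) ↔
    (∀ a a' : A, IsStarNormal a → IsStarNormal a' →
      f a * f a' = f a' * f a → a * a' = a' * a) := by
  let : CStarAlgebra A := {}
  let : CStarAlgebra B := {}
  open scoped CStarAlgebra in
  exact reflects_commeasurability_iff_general (map_continuous f)
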